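/- The set-Ramsey number of the triangle for (4,2)-colourings satisfies R_{4,2}(K_3) = 9; that is, every (4,2)-colouring of K_9 contains a monochromatic triangle, and there is a (4,2)-colouring of K_8 with no monochromatic triangle. -/

import Mathlib

/-!
Upper bound. Let `φ` be a `(4,2)`-colouring of `K_9` without monochromatic triangle. No edge among
the neighbours of a vertex `v` in colour `c` carries `c`. Fix one such neighbour `x`. If two others
`y` and `z` had `φ(xy) = φ(xz)`, then `φ(yz)` would meet this set, both being pairs out of three
colours, and `xyz` would be monochromatic. So `y ↦ φ(xy)` is injective and `v` has at most `3 + 1`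
neighbours in colour `c`. As `8 · 2 = 4 · 4`, every colour class is a `4`-regular triangle-free
graph on `9` vertices, hence bipartite by the Andrásfai–Erdős–Sós theorem; but a regular bipartite
graph of positive degree has an even number of vertices.

Lower bound. Index the vertices by a code of length `4` over an alphabet of size `2` with minimum
distance `2`, and colour each edge by two positions in which its endpoints differ. Three words
cannot pairwise differ in the same position. The parity-check code has `8` words.
-/

/-- `φ` is an `(r,k)`-colouring of `K_n`: every (non-loop) edge gets a `k`-element
set of colours from `{1,…,r}`. -/
def IsSetColoring (n r k : ℕ) (φ : Sym2 (Fin n) → Finset (Fin r)) : Prop :=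
  ∀ e : Sym2 (Fin n), ¬ e.IsDiag → (φ e).card = k

/-- The set-coloured `K_n` contains a monochromatic copy of `K_t`: there are a colour
`c` and `t` distinct vertices such that every edge between them carries colour `c`. -/
def HasMonoClique (n r t : ℕ) (φ : Sym2 (Fin n) → Finset (Fin r)) : Prop :=
  ∃ c : Fin r, ∃ f : Fin t ↪ Fin n, ∀ i j : Fin t, i ≠ j → c ∈ φ s(f i, f j)

/-- The set-Ramsey number `R_{r,k}(K_t)`: the least `n` such that every
`(r,k)`-colouring of `K_n` contains a monochromatic copy of `K_t`. -/
noncomputable def setRamseyClique (r k t : ℕ) : ℕ :=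
  sInf {n : ℕ | ∀ φ : Sym2 (Fin n) → Finset (Fin r),
    IsSetColoring n r k φ → HasMonoClique n r t φ}

/-- The colour class of `c`: the graph of the edges whose colour set contains `c`. Diagonal elements
of `Sym2 V` are dropped, whatever `φ` assigns to them. -/
def colorGraph {V C : Type*} (φ : Sym2 V → Finset C) (c : C) : SimpleGraph V :=
  SimpleGraph.fromEdgeSet {e | c ∈ φ e}

lemma colorGraph_adj {V C : Type*} {φ : Sym2 V → Finset C} {c : C} {x y : V} :
    (colorGraph φ c).Adj x y ↔ c ∈ φ s(x, y) ∧ x ≠ y :=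
  SimpleGraph.fromEdgeSet_adj _

instance {V C : Type*} [DecidableEq V] [DecidableEq C] (φ : Sym2 V → Finset C) (c : C) :
    DecidableRel (colorGraph φ c).Adj :=
  fun _ _ ↦ decidable_of_iff' _ colorGraph_adj

lemma not_hasMonoClique_iff {n r t : ℕ} {φ : Sym2 (Fin n) → Finset (Fin r)} :
    ¬ HasMonoClique n r t φ ↔ ∀ c, (colorGraph φ c).CliqueFree t := by
  rw [← not_iff_not, not_not, not_forall]
  refine exists_congr fun c ↦ ⟨?_, fun hc ↦ ?_⟩
  · rintro ⟨f, hf⟩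
    refine (SimpleGraph.not_cliqueFree_iff_top_isContained t).2
      ⟨⟨f, fun {i j} hij ↦ ?_⟩, f.injective⟩
    exact colorGraph_adj.2 ⟨hf i j hij, f.injective.ne hij⟩
  · let g := SimpleGraph.topEmbeddingOfNotCliqueFree hc
    exact ⟨g.toEmbedding, fun i j hij ↦ (colorGraph_adj.1 (g.map_adj_iff.2 hij)).1⟩

section Restriction

variable {m n r k t : ℕ}

lemma IsSetColoring.comap {φ : Sym2 (Fin n) → Finset (Fin r)} (hφ : IsSetColoring n r k φ)
    (f : Fin m ↪ Fin n) : IsSetColoring m r k (φ ∘ Sym2.map f) :=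
  fun e he ↦ hφ _ (by rwa [Sym2.isDiag_map f.injective])

lemma HasMonoClique.of_comap {φ : Sym2 (Fin n) → Finset (Fin r)} {f : Fin m ↪ Fin n}
    (h : HasMonoClique m r t (φ ∘ Sym2.map f)) : HasMonoClique n r t φ := by
  obtain ⟨c, g, hg⟩ := h
  exact ⟨c, g.trans f, hg⟩

lemma setRamseyClique_eq_succ_iff :
    setRamseyClique r k t = n + 1 ↔
      (∀ φ : Sym2 (Fin (n + 1)) → Finset (Fin r),
        IsSetColoring (n + 1) r k φ → HasMonoClique (n + 1) r t φ) ∧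
      ∃ φ : Sym2 (Fin n) → Finset (Fin r), IsSetColoring n r k φ ∧ ¬ HasMonoClique n r t φ := by
  rw [setRamseyClique, Nat.sInf_upward_closed_eq_succ_iff]
  · simp only [Set.mem_ofPred_eq, not_forall, exists_prop]
  · intro m n hmn hm φ hφ
    exact (hm _ (hφ.comap (Fin.castLEEmb hmn))).of_comap

end Restriction

section RegularGraphs

variable {V : Type*} [Fintype V] {G : SimpleGraph V} [DecidableRel G.Adj] {d : ℕ}

lemma even_card_of_isBipartite_of_isRegularOfDegree (hG : G.IsBipartite)
    (hreg : G.IsRegularOfDegree d) (hd : d ≠ 0) : Even (Fintype.card V) := by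
  classical
  obtain ⟨C⟩ := hG
  let s : Finset V := {v | C v = 0}
  have hbip : G.IsBipartiteWith (s : Set V) (sᶜ : Finset V) := by
    refine ⟨Finset.disjoint_coe.2 disjoint_compl_right, fun v w hvw ↦ ?_⟩
    have := C.valid hvw
    simp only [s, Finset.coe_compl, Finset.coe_filter, Set.mem_compl_iff, Set.mem_ofPred_eq,
      Finset.mem_univ, true_and]
    omega
  have hsum : s.card * d = sᶜ.card * d := by
    simpa only [hreg.degree_eq, Finset.sum_const, smul_eq_mul] using
      SimpleGraph.isBipartiteWith_sum_degrees_eq hbip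
  rw [← s.card_add_card_compl, ← Nat.eq_of_mul_eq_mul_right (Nat.pos_of_ne_zero hd) hsum]
  exact Even.add_self _

lemma even_card_of_cliqueFree_three_of_isRegularOfDegree (hG : G.CliqueFree 3)
    (hreg : G.IsRegularOfDegree d) (hd : 2 * Fintype.card V < 5 * d) : Even (Fintype.card V) := by
  rcases isEmpty_or_nonempty V with _ | _
  · simp
  have hmin : G.minDegree = d := hreg.minDegree_eq
  have hbip : G.IsBipartite :=
    SimpleGraph.colorable_of_cliqueFree_lt_minDegree hG (by rw [hmin]; omega)
  exact even_card_of_isBipartite_of_isRegularOfDegree hbip hreg (by omega)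

end RegularGraphs

section UpperBound

variable {n r k : ℕ}

lemma IsSetColoring.card_eq {φ : Sym2 (Fin n) → Finset (Fin r)} (hφ : IsSetColoring n r k φ)
    {x y : Fin n} (hxy : x ≠ y) : (φ s(x, y)).card = k :=
  hφ _ (Sym2.mk_isDiag_iff.not.2 hxy)

lemma IsSetColoring.sum_degree_colorGraph {φ : Sym2 (Fin (n + 1)) → Finset (Fin r)}
    (hφ : IsSetColoring (n + 1) r k φ) (v : Fin (n + 1)) :
    ∑ c, (colorGraph φ c).degree v = n * k := by
  have hneighbor (c : Fin r) : (colorGraph φ c).neighborFinset v =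
      (Finset.univ.erase v).filter fun w ↦ c ∈ φ s(v, w) := by
    ext w
    simp [colorGraph_adj, and_comm, eq_comm]
  calc ∑ c, (colorGraph φ c).degree v
      = ∑ c, ((Finset.univ.erase v).filter fun w ↦ c ∈ φ s(v, w)).card := by
        simp only [← SimpleGraph.card_neighborFinset_eq_degree, hneighbor]
    _ = ∑ w ∈ Finset.univ.erase v, (Finset.univ.filter fun c ↦ c ∈ φ s(v, w)).card :=
        Finset.sum_card_bipartiteAbove_eq_sum_card_bipartiteBelow _
    _ = ∑ _w ∈ Finset.univ.erase v, k := by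
        refine Finset.sum_congr rfl fun w hw ↦ ?_
        rw [Finset.filter_univ_mem, hφ.card_eq (Finset.ne_of_mem_erase hw).symm]
    _ = n * k := by simp

lemma disjoint_of_cliqueFree_three {V C : Type*} {φ : Sym2 V → Finset C}
    (hfree : ∀ c, (colorGraph φ c).CliqueFree 3) {x y z : V} (hxy : x ≠ y) (hxz : x ≠ z)
    (hyz : y ≠ z) (heq : φ s(x, y) = φ s(x, z)) : Disjoint (φ s(x, y)) (φ s(y, z)) := by
  classical
  refine Finset.disjoint_left.2 fun c hcxy hcyz ↦ hfree c {x, y, z} ?_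
  exact SimpleGraph.is3Clique_triple_iff.2
    ⟨colorGraph_adj.2 ⟨hcxy, hxy⟩, colorGraph_adj.2 ⟨heq ▸ hcxy, hxz⟩,
      colorGraph_adj.2 ⟨hcyz, hyz⟩⟩

lemma card_le_choose_add_one_of_cliqueFree_three {V C : Type*} {φ : Sym2 V → Finset C}
    (hfree : ∀ c, (colorGraph φ c).CliqueFree 3) {N : Finset V} {S : Finset C}
    (hS : S.card < 2 * k) (hN : (N : Set V).Pairwise fun x y ↦ φ s(x, y) ∈ S.powersetCard k) :
    N.card ≤ S.card.choose k + 1 := by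
  classical
  obtain rfl | ⟨x, hx⟩ := N.eq_empty_or_nonempty
  · simp
  have hmaps : Set.MapsTo (fun y ↦ φ s(x, y)) (N.erase x) (S.powersetCard k) := by
    intro y hy
    obtain ⟨hyx, hy⟩ := Finset.mem_erase.1 hy
    exact hN hx hy hyx.symm
  have hinj : Set.InjOn (fun y ↦ φ s(x, y)) (N.erase x) := by
    intro y hy z hz heq
    by_contra hyz
    obtain ⟨hyx, hyN⟩ := Finset.mem_erase.1 hy
    obtain ⟨hzx, hzN⟩ := Finset.mem_erase.1 hz
    obtain ⟨hxyS, hxyk⟩ := Finset.mem_powersetCard.1 (hN hx hyN hyx.symm)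
    obtain ⟨hyzS, hyzk⟩ := Finset.mem_powersetCard.1 (hN hyN hzN hyz)
    have hmeet : (φ s(x, y) ∩ φ s(y, z)).Nonempty :=
      Finset.inter_nonempty_of_card_lt_card_add_card hxyS hyzS (by omega)
    exact Finset.not_disjoint_iff_nonempty_inter.2 hmeet
      (disjoint_of_cliqueFree_three hfree hyx.symm hzx.symm hyz heq)
  rw [← Finset.card_erase_add_one hx, ← Finset.card_powersetCard]
  gcongr
  exact Finset.card_le_card_of_injOn _ hmaps hinj

lemma IsSetColoring.degree_colorGraph_le {φ : Sym2 (Fin n) → Finset (Fin (r + 1))}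
    (hφ : IsSetColoring n (r + 1) k φ) (hfree : ∀ c, (colorGraph φ c).CliqueFree 3)
    (hrk : r < 2 * k) (c : Fin (r + 1)) (v : Fin n) :
    (colorGraph φ c).degree v ≤ r.choose k + 1 := by
  have hcard : (Finset.univ.erase c).card = r := by simp
  have hmem : ((colorGraph φ c).neighborFinset v : Set (Fin n)).Pairwise
      fun x y ↦ φ s(x, y) ∈ (Finset.univ.erase c).powersetCard k := by
    rw [SimpleGraph.coe_neighborFinset]
    intro x hx y hy hxy
    have hc : c ∉ φ s(x, y) := fun hc ↦
      SimpleGraph.isIndepSet_neighborSet_of_triangleFree _ (hfree c) v hx hy hxy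
        (colorGraph_adj.2 ⟨hc, hxy⟩)
    exact Finset.mem_powersetCard.2
      ⟨Finset.subset_erase.2 ⟨Finset.subset_univ _, hc⟩, hφ.card_eq hxy⟩
  have hle := card_le_choose_add_one_of_cliqueFree_three hfree (by rwa [hcard]) hmem
  rwa [hcard, SimpleGraph.card_neighborFinset_eq_degree] at hle

variable {φ : Sym2 (Fin (n + 1)) → Finset (Fin (r + 1))}

lemma IsSetColoring.isRegularOfDegree_colorGraph (hφ : IsSetColoring (n + 1) (r + 1) k φ)
    (hfree : ∀ c, (colorGraph φ c).CliqueFree 3) (hrk : r < 2 * k)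
    (hn : (r + 1) * (r.choose k + 1) ≤ n * k) (c : Fin (r + 1)) :
    (colorGraph φ c).IsRegularOfDegree (r.choose k + 1) := by
  intro v
  have hle : ∀ c ∈ Finset.univ, (colorGraph φ c).degree v ≤ r.choose k + 1 :=
    fun c _ ↦ hφ.degree_colorGraph_le hfree hrk c v
  have hsum : ∑ c, (colorGraph φ c).degree v = ∑ _c : Fin (r + 1), (r.choose k + 1) :=
    le_antisymm (Finset.sum_le_sum hle) (by simpa [hφ.sum_degree_colorGraph v] using hn)
  exact (Finset.sum_eq_sum_iff_of_le hle).1 hsum c (Finset.mem_univ c)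

theorem IsSetColoring.hasMonoClique_three (hφ : IsSetColoring (n + 1) (r + 1) k φ)
    (hkr : k < r) (hrk : r < 2 * k) (hn : (r + 1) * (r.choose k + 1) ≤ n * k) (heven : Even n) :
    HasMonoClique (n + 1) (r + 1) 3 φ := by
  by_contra hno
  have hfree := not_hasMonoClique_iff.1 hno
  have hreg := hφ.isRegularOfDegree_colorGraph hfree hrk hn
  have hsum : n * k = (r + 1) * (r.choose k + 1) := by
    simp [← hφ.sum_degree_colorGraph 0, (hreg _).degree_eq]
  have hn_le : n ≤ 2 * (r.choose k + 1) := by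
    refine Nat.le_of_mul_le_mul_right (c := k) ?_ (by omega)
    calc n * k = (r + 1) * (r.choose k + 1) := hsum
      _ ≤ 2 * k * (r.choose k + 1) := by gcongr; omega
      _ = 2 * (r.choose k + 1) * k := by ring
  have hchoose : 1 < r.choose k := by
    have hpos : 0 < r.choose k := Nat.choose_pos hkr.le
    have hne_one : r.choose k ≠ 1 := by rw [Ne, Nat.choose_eq_one_iff]; omega
    omega
  have hcard : Even (n + 1) := by
    simpa only [Fintype.card_fin] using
      even_card_of_cliqueFree_three_of_isRegularOfDegree (hfree 0) (hreg 0)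
        (by rw [Fintype.card_fin]; omega)
  exact Nat.even_add_one.1 hcard heven

end UpperBound

section LowerBound

variable {A : Type*} [DecidableEq A]

theorem exists_isSetColoring_not_hasMonoClique_of_le_hammingDist [Fintype A] {n r k : ℕ}
    {w : Fin n → Fin r → A} (hw : Pairwise fun x y ↦ k ≤ hammingDist (w x) (w y)) :
    ∃ φ : Sym2 (Fin n) → Finset (Fin r),
      IsSetColoring n r k φ ∧ ¬ HasMonoClique n r (Fintype.card A + 1) φ := by
  have hpositions (e : Sym2 (Fin n)) (he : ¬ e.IsDiag) :
      ∃ s : Finset (Fin r), s.card = k ∧ ∀ x y, e = s(x, y) → ∀ c ∈ s, w x c ≠ w y c := by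
    induction e using Sym2.ind with | _ x y
    obtain ⟨s, hs, hsk⟩ := Finset.exists_subset_card_eq (hw (Sym2.mk_isDiag_iff.not.1 he))
    have hne (c : Fin r) (hc : c ∈ s) : w x c ≠ w y c := (Finset.mem_filter.1 (hs hc)).2
    refine ⟨s, hsk, fun x' y' hxy c hc ↦ ?_⟩
    obtain ⟨rfl, rfl⟩ | ⟨rfl, rfl⟩ := Sym2.eq_iff.1 hxy
    exacts [hne c hc, (hne c hc).symm]
  choose! φ hcard hne using hpositions
  refine ⟨φ, hcard, fun ⟨c, f, hf⟩ ↦ ?_⟩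
  have hinj : Function.Injective fun i ↦ w (f i) c := by
    intro i j hij
    by_contra hne_ij
    exact hne _ (Sym2.mk_isDiag_iff.not.2 (f.injective.ne hne_ij)) _ _ rfl c (hf i j hne_ij) hij
  simpa using Fintype.card_le_of_injective _ hinj

lemma two_le_hammingDist_of_sum_eq [AddCancelCommMonoid A] {ι : Type*} [Fintype ι] {u v : ι → A}
    (hne : u ≠ v) (hsum : ∑ i, u i = ∑ i, v i) : 2 ≤ hammingDist u v := by
  classical
  obtain ⟨i, hi⟩ := Function.ne_iff.1 hne
  obtain ⟨j, hji, hj⟩ : ∃ j ≠ i, u j ≠ v j := by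
    by_contra! h
    have herase : ∑ j ∈ Finset.univ.erase i, u j = ∑ j ∈ Finset.univ.erase i, v j :=
      Finset.sum_congr rfl fun j hj ↦ h j (Finset.ne_of_mem_erase hj)
    rw [← Finset.add_sum_erase _ _ (Finset.mem_univ i),
      ← Finset.add_sum_erase _ _ (Finset.mem_univ i), herase] at hsum
    exact hi (add_right_cancel hsum)
  exact Finset.one_lt_card.2 ⟨i, by simpa, j, by simpa, hji.symm⟩

theorem exists_isSetColoring_two_not_hasMonoClique (q r : ℕ) [NeZero q] :
    ∃ φ : Sym2 (Fin (q ^ r)) → Finset (Fin (r + 1)),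
      IsSetColoring (q ^ r) (r + 1) 2 φ ∧ ¬ HasMonoClique (q ^ r) (r + 1) (q + 1) φ := by
  let e : Fin (q ^ r) ≃ (Fin r → ZMod q) := (Fintype.equivFinOfCardEq (by simp)).symm
  let parityCheckWord (x : Fin (q ^ r)) : Fin (r + 1) → ZMod q := Fin.cons (-∑ i, e x i) (e x)
  have hdist : Pairwise fun x y ↦ 2 ≤ hammingDist (parityCheckWord x) (parityCheckWord y) := by
    intro x y hxy
    refine two_le_hammingDist_of_sum_eq (fun h ↦ hxy (e.injective (Fin.cons_inj.1 h).2)) ?_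
    simp [parityCheckWord, Fin.sum_univ_succ]
  simpa only [ZMod.card] using exists_isSetColoring_not_hasMonoClique_of_le_hammingDist hdist

end LowerBound

/-- **Corollary (R₄,₂(K₃) = 9).** Every `(4,2)`-colouring of `K_9` contains a
monochromatic triangle, and there is a `(4,2)`-colouring of `K_8` with no
monochromatic triangle; hence `R_{4,2}(K_3) = 9`. -/
theorem setRamsey_four_two_triangle :
    (∀ φ : Sym2 (Fin 9) → Finset (Fin 4), IsSetColoring 9 4 2 φ → HasMonoClique 9 4 3 φ) ∧
    (∃ φ : Sym2 (Fin 8) → Finset (Fin 4), IsSetColoring 8 4 2 φ ∧ ¬ HasMonoClique 8 4 3 φ) ∧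
    setRamseyClique 4 2 3 = 9 := by
  have hupper (φ : Sym2 (Fin 9) → Finset (Fin 4)) (hφ : IsSetColoring 9 4 2 φ) :
      HasMonoClique 9 4 3 φ :=
    hφ.hasMonoClique_three (by norm_num) (by norm_num) (by decide) (by decide)
  have hlower := exists_isSetColoring_two_not_hasMonoClique 2 3
  exact ⟨hupper, hlower, setRamseyClique_eq_succ_iff.2 ⟨hupper, hlower⟩⟩
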